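/- The restriction of the map κ(μ) = −Σ_{(p,q)∈μ} α_{q−p mod r} to r-cores coincides with the charge-vector bijection from r-cores to the sl_r root lattice; in particular κ restricted to r-cores is a bijection onto Q. -/

import Mathlib

/-- A function `ℕ → ℕ` is (the sequence of parts of) a partition. -/
def IsPartitionFun (f : ℕ → ℕ) : Prop :=
  (∀ i j : ℕ, i ≤ j → f j ≤ f i) ∧ ∃ n : ℕ, ∀ i : ℕ, n ≤ i → f i = 0

/-- The number of `0`'s of an edge sequence lying above position `j`. -/
noncomputable def numZerosAbove (b : ℤ → Prop) (j : ℤ) : ℕ :=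
  Nat.card {i : ℤ // j < i ∧ ¬ b i}

/-- The shape of an edge sequence. -/
noncomputable def esShape (b : ℤ → Prop) (k : ℕ) : ℕ :=
  Nat.card {j : ℤ // b j ∧ k + 1 ≤ numZerosAbove b j}

/-- The charge of an edge sequence. -/
noncomputable def esCharge (b : ℤ → Prop) : ℤ :=
  (Nat.card {i : ℤ // i < 0 ∧ b i} : ℤ) - (Nat.card {i : ℤ // 0 ≤ i ∧ ¬ b i} : ℤ)

/-- The `j`-th part of the conjugate partition of `f` (`j ≥ 1`). -/
noncomputable def conjCount (f : ℕ → ℕ) (j : ℕ) : ℕ :=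
  Nat.card {i : ℕ // j ≤ f i}

/-- The partition `f` has a box of hook length `n`. -/
def HasHook (f : ℕ → ℕ) (n : ℕ) : Prop :=
  ∃ a j : ℕ, 1 ≤ j ∧ j ≤ f a ∧ (f a - j) + (conjCount f j - (a + 1)) + 1 = n

/-- The canonical (total charge zero) edge sequence encoding of a partition `f`. -/
def edgeOf (f : ℕ → ℕ) (i : ℤ) : Prop :=
  ∃ k : ℕ, i = (k : ℤ) - (conjCount f (k + 1) : ℤ)

/-- The residue-`c` box count of a partition: the number of boxes whose residue
(mod `r`) is `c`; boxes are indexed from `0`. -/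
noncomputable def residueCount (r : ℕ) (f : ℕ → ℕ) (c : ZMod r) : ℕ :=
  Nat.card {x : ℕ × ℕ // x.2 < f x.1 ∧ (((x.1 : ℤ) - (x.2 : ℤ) : ℤ) : ZMod r) = c}

/-- The map `κ(μ) = -∑_{boxes of μ} α_{residue}` into the `sl_r` root lattice
`Q = {v : ZMod r → ℤ | ∑ v = 0}`, where `α_i = ε_{i-1} - ε_i`; concretely, the `c`-th
coordinate of `κ(μ)` is `(# boxes of residue c) - (# boxes of residue c+1)`. -/
noncomputable def kappa (r : ℕ) (f : ℕ → ℕ) : ZMod r → ℤ :=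
  fun c => (residueCount r f c : ℤ) - (residueCount r f (c + 1) : ℤ)

/-- The charge vector of a partition: the vector of charges of the `r` runners of its
charge-zero edge sequence (labelled compatibly with `κ`). -/
noncomputable def chargeVec (r : ℕ) [NeZero r] (f : ℕ → ℕ) : ZMod r → ℤ :=
  fun c => esCharge (fun j : ℤ => edgeOf f (r * j + (((-1 - c : ZMod r)).val : ℤ)))

/-!
Every edge sequence `b` has, for `L` far to the left, charge `-L - #{x ≥ L | ¬ b x}`. Cutting at a
multiple of `r` shows that the charge of `b` is the sum of the charges of its runners. The zeros
of the edge sequence of `f` are the beta numbers `f a - 1 - a`.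

For `κ = chargeVec`, the boxes of a row contribute to `κ` a telescoping sum, leaving only the
residues `a` and `a - f a` of its two ends; the former are equidistributed over a multiple of `r`
rows, and the latter say on which runner the beta number of the row lies.

A hook of length `r` is a `1` at some `x` together with a `0` at `x + r`. Hence `f` is an `r`-core
exactly when each runner is a sequence `0...01...1`, and such a runner is determined by its charge,
which may be any integer. Conversely, interleaving such runners gives the edge sequence of a
partition as soon as the total charge vanishes.
-/

/-- An edge sequence: all steps are `0` far to the left and `1` far to the right.
The predicate `b` holds at the positions of the `1`s. -/
def IsEdgeSequence (b : ℤ → Prop) : Prop :=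
  (∀ᶠ j in Filter.atBot, ¬ b j) ∧ ∀ᶠ j in Filter.atTop, b j

/-- The runner of residue `d` of an edge sequence: its restriction to the positions congruent
to `d` modulo `r`, the position `r * j + d.val` being renumbered `j`. -/
def runner (r : ℕ) (b : ℤ → Prop) (d : ZMod r) : ℤ → Prop :=
  fun j => b (r * j + d.val)

/-- The sequence whose runner of residue `d` is `B d`. -/
def interleave (r : ℕ) (B : ZMod r → ℤ → Prop) : ℤ → Prop :=
  fun x => B x (x / r)

/-- The beta numbers `λ_i - i` of a partition, with rows indexed from `0`: `betaNumber f a` is the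
position of the `0` that the row `a` contributes to the edge sequence of `f`. -/
def betaNumber (f : ℕ → ℕ) (a : ℕ) : ℤ :=
  f a - 1 - a

theorem mem_image_range_iff_of_strictAnti {α : Type*} [LinearOrder α] {z : ℕ → α}
    (hz : StrictAnti z) (n : ℕ) (x : α) :
    x ∈ (Finset.range n).image z ↔ z n < x ∧ x ∈ Set.range z := by
  simp only [Finset.mem_image, Finset.mem_range]
  constructor
  · rintro ⟨a, ha, rfl⟩
    exact ⟨hz ha, a, rfl⟩
  · rintro ⟨hx, a, rfl⟩
    exact ⟨a, hz.lt_iff_gt.mp hx, rfl⟩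

section Charge

variable {b : ℤ → Prop}

theorem esCharge_eq_neg_sub_card {L : ℤ} {Z : Finset ℤ} (hlow : ∀ x < L, ¬ b x)
    (hZ : ∀ x, x ∈ Z ↔ L ≤ x ∧ ¬ b x) : esCharge b = -L - Z.card := by
  have hones : ∀ x, x ∈ Finset.Ico L 0 \ Z ↔ x < 0 ∧ b x := by
    intro x
    have := hlow x
    simp only [Finset.mem_sdiff, Finset.mem_Ico, hZ]
    grind
  have hdisj : Disjoint (Finset.Ico 0 L) (Z \ Finset.Ico L 0) := by
    rw [Finset.disjoint_left]
    intro x hx hx'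
    simp only [Finset.mem_sdiff, Finset.mem_Ico, hZ] at hx hx'
    omega
  have hzeros : ∀ x, x ∈ (Finset.Ico 0 L).disjUnion _ hdisj ↔ 0 ≤ x ∧ ¬ b x := by
    intro x
    have := hlow x
    simp only [Finset.mem_disjUnion, Finset.mem_sdiff, Finset.mem_Ico, hZ]
    grind
  have hIco : ((Finset.Ico L 0).card : ℤ) - (Finset.Ico 0 L).card = -L := by
    simp only [Int.card_Ico]
    omega
  have hsdiff : ((Finset.Ico L 0 \ Z).card : ℤ) - (Z \ Finset.Ico L 0).card =
      (Finset.Ico L 0).card - Z.card := by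
    have h := Finset.card_sdiff_add_card (Finset.Ico L 0) Z
    have h' := Finset.card_sdiff_add_card Z (Finset.Ico L 0)
    rw [Finset.union_comm] at h'
    omega
  rw [esCharge, Nat.subtype_card _ hones, Nat.subtype_card _ hzeros, Finset.card_disjUnion]
  push_cast
  linarith

theorem isEdgeSequence_const_le (m : ℤ) : IsEdgeSequence (m ≤ ·) :=
  ⟨(Filter.eventually_lt_atBot m).mono fun _ => not_le.mpr, Filter.eventually_ge_atTop m⟩

theorem esCharge_const_le (m : ℤ) : esCharge (m ≤ ·) = -m := by
  simpa using esCharge_eq_neg_sub_card (b := (m ≤ ·)) (L := m) (Z := ∅)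
    (fun _ hx => not_le.mpr hx) (by simp)

theorem esCharge_eq_of_strictAnti {z : ℕ → ℤ} (hz : StrictAnti z)
    (hzb : ∀ x, x ∈ Set.range z ↔ ¬ b x) {n : ℕ} (hlow : ∀ x ≤ z n, ¬ b x) :
    esCharge b = -(z n + 1) - n := by
  have hZ : ∀ x, x ∈ (Finset.range n).image z ↔ z n + 1 ≤ x ∧ ¬ b x := fun x => by
    rw [mem_image_range_iff_of_strictAnti hz, hzb, Int.add_one_le_iff]
  rw [esCharge_eq_neg_sub_card (fun x hx => hlow x (by omega)) hZ,
    Finset.card_image_of_injective _ hz.injective, Finset.card_range]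

namespace IsEdgeSequence

theorem exists_forall_lt (hb : IsEdgeSequence b) : ∃ L, ∀ x < L, ¬ b x :=
  (Filter.eventually_atBot.mp hb.1).imp fun _ h x hx => h x hx.le

theorem exists_forall_ge (hb : IsEdgeSequence b) : ∃ U, ∀ x ≥ U, b x :=
  Filter.eventually_atTop.mp hb.2

theorem finite_zeros (hb : IsEdgeSequence b) (L : ℤ) : {x | L ≤ x ∧ ¬ b x}.Finite := by
  obtain ⟨U, hU⟩ := hb.exists_forall_ge
  refine (Set.finite_Ico L U).subset fun x hx => ⟨hx.1, ?_⟩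
  exact lt_of_not_ge fun h => hx.2 (hU x h)

theorem eq_le_of_forall_succ (hb : IsEdgeSequence b) (hsucc : ∀ j, b j → b (j + 1)) :
    b = (-esCharge b ≤ ·) := by
  obtain ⟨L, hL⟩ := hb.exists_forall_lt
  obtain ⟨U, hU⟩ := hb.exists_forall_ge
  obtain ⟨m, hm, hmin⟩ := Int.exists_least_of_bdd (P := b)
    ⟨L, fun x hx => not_lt.mp fun h => hL x h hx⟩ ⟨U, hU U le_rfl⟩
  have hbm : b = (m ≤ ·) := by
    ext j
    exact ⟨hmin j, fun h => Int.leInduction hm (fun n _ => hsucc n) j h⟩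
  rw [hbm, esCharge_const_le, neg_neg]

theorem exists_strictAnti_mem_range_iff (hb : IsEdgeSequence b) :
    ∃ z : ℕ → ℤ, StrictAnti z ∧ ∀ x, x ∈ Set.range z ↔ ¬ b x := by
  obtain ⟨L, hL⟩ := hb.exists_forall_lt
  obtain ⟨U, hU⟩ := hb.exists_forall_ge
  let p : ℕ → Prop := fun m => ¬ b (U - 1 - m)
  have hinf : {m | p m}.Infinite := by
    refine Set.infinite_of_not_bddAbove fun ⟨M, hM⟩ => ?_
    have : (U - L).toNat + M + 1 ≤ M := hM (hL _ (by omega))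
    omega
  refine ⟨fun a => U - 1 - Nat.nth p a, fun a a' h => ?_, fun x => ⟨?_, fun hx => ?_⟩⟩
  · have := Nat.nth_strictMono (p := p) hinf h
    simp only
    omega
  · rintro ⟨a, rfl⟩
    exact Nat.nth_mem_of_infinite hinf a
  · have hxU : x < U := lt_of_not_ge fun h => hx (hU x h)
    have hpx : p (U - 1 - x).toNat := by
      simpa only [p, Int.toNat_of_nonneg (show 0 ≤ U - 1 - x by omega), sub_sub_cancel] using hx
    obtain ⟨a, ha⟩ := (Nat.range_nth_of_infinite hinf).ge hpx
    exact ⟨a, by simp only [ha]; omega⟩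

end IsEdgeSequence

end Charge

section Runner

variable {r : ℕ} {b : ℤ → Prop}

theorem forall_runner_succ_iff [NeZero r] :
    (∀ d j, runner r b d j → runner r b d (j + 1)) ↔ ∀ x, b x → b (x + r) := by
  have hsucc (d : ZMod r) (j : ℤ) : r * (j + 1) + (d.val : ℤ) = r * j + d.val + r := by ring
  simp only [runner, hsucc]
  refine ⟨fun h x hx => ?_, fun h d j => h _⟩
  simpa only [ZMod.val_intCast, Int.mul_ediv_add_emod] using
    h x (x / r) (by rwa [ZMod.val_intCast, Int.mul_ediv_add_emod])

theorem eq_interleave_runner [NeZero r] (b : ℤ → Prop) : b = interleave r (runner r b) := by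
  ext x
  rw [interleave, runner, ZMod.val_intCast, Int.mul_ediv_add_emod]

theorem mul_add_val_ediv [NeZero r] (d : ZMod r) (j : ℤ) : (r * j + d.val : ℤ) / r = j := by
  have hr : (r : ℤ) ≠ 0 := NeZero.ne _
  have hd : (d.val : ℤ) < r := mod_cast d.val_lt
  rw [Int.mul_add_ediv_left _ _ hr, Int.ediv_eq_zero_of_lt (by positivity) hd, add_zero]

theorem intCast_mul_add_val [NeZero r] (d : ZMod r) (j : ℤ) :
    ((r * j + d.val : ℤ) : ZMod r) = d := by
  simp

theorem runner_interleave [NeZero r] (B : ZMod r → ℤ → Prop) (d : ZMod r) :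
    runner r (interleave r B) d = B d := by
  ext j
  rw [runner, interleave, mul_add_val_ediv, intCast_mul_add_val]

theorem isEdgeSequence_runner [NeZero r] (hb : IsEdgeSequence b) (d : ZMod r) :
    IsEdgeSequence (runner r b d) := by
  have hr : (0 : ℤ) < r := mod_cast NeZero.pos r
  obtain ⟨L, hL⟩ := hb.exists_forall_lt
  obtain ⟨U, hU⟩ := hb.exists_forall_ge
  constructor
  · refine (Filter.eventually_lt_atBot (L / r)).mono fun j hj => hL _ <| lt_of_not_ge fun h => ?_
    exact hj.not_ge (by simpa only [mul_add_val_ediv] using Int.ediv_le_ediv hr h)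
  · refine (Filter.eventually_gt_atTop (U / r)).mono fun j hj => hU _ <| le_of_not_ge fun h => ?_
    exact hj.not_ge (by simpa only [mul_add_val_ediv] using Int.ediv_le_ediv hr h)

theorem isEdgeSequence_interleave [NeZero r] {B : ZMod r → ℤ → Prop}
    (hB : ∀ d, IsEdgeSequence (B d)) : IsEdgeSequence (interleave r B) := by
  have hr : (0 : ℤ) < r := mod_cast NeZero.pos r
  have hlow : ∀ᶠ j in Filter.atBot, ∀ d, ¬ B d j := Filter.eventually_all.mpr fun d => (hB d).1
  have hhigh : ∀ᶠ j in Filter.atTop, ∀ d, B d j := Filter.eventually_all.mpr fun d => (hB d).2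
  obtain ⟨L, hL⟩ := Filter.eventually_atBot.mp hlow
  obtain ⟨U, hU⟩ := Filter.eventually_atTop.mp hhigh
  constructor
  · refine Filter.eventually_atBot.mpr ⟨L * r, fun x hx => hL _ ?_ _⟩
    exact Int.ediv_le_of_le_mul hr hx
  · refine Filter.eventually_atTop.mpr ⟨U * r, fun x hx => hU _ ?_ _⟩
    exact (Int.le_ediv_iff_mul_le hr).mpr hx

theorem esCharge_runner [NeZero r] {M : ℤ} {Z : Finset ℤ} (hlow : ∀ x < r * M, ¬ b x)
    (hZ : ∀ x, x ∈ Z ↔ r * M ≤ x ∧ ¬ b x) (d : ZMod r) :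
    esCharge (runner r b d) = -M - (Z.filter fun x : ℤ => (x : ZMod r) = d).card := by
  have hr : (0 : ℤ) < r := mod_cast NeZero.pos r
  have hrec {x : ℤ} (hx : (x : ZMod r) = d) : r * (x / r) + (d.val : ℤ) = x := by
    rw [← hx, ZMod.val_intCast, Int.mul_ediv_add_emod]
  have hinj : Set.InjOn (· / (r : ℤ)) (Z.filter fun x : ℤ => (x : ZMod r) = d) := by
    intro x hx y hy hxy
    rw [← hrec (Finset.mem_filter.mp hx).2, ← hrec (Finset.mem_filter.mp hy).2]
    exact congrArg (fun q => r * q + (d.val : ℤ)) hxy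
  have hle (j : ℤ) : r * M ≤ r * j + d.val ↔ M ≤ j := by
    rw [mul_comm, ← Int.le_ediv_iff_mul_le hr, mul_add_val_ediv]
  rw [← Finset.card_image_of_injOn hinj]
  refine esCharge_eq_neg_sub_card (fun j hj => hlow _ ?_) fun j => ?_
  · exact lt_of_not_ge fun h => hj.not_ge ((hle j).mp h)
  · rw [runner, ← hle, ← hZ]
    simp only [Finset.mem_image, Finset.mem_filter]
    constructor
    · rintro ⟨x, ⟨hxZ, hxd⟩, rfl⟩
      rwa [hrec hxd]
    · exact fun h => ⟨_, ⟨h, intCast_mul_add_val d j⟩, mul_add_val_ediv d j⟩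

theorem sum_esCharge_runner [NeZero r] (hb : IsEdgeSequence b) :
    ∑ d, esCharge (runner r b d) = esCharge b := by
  obtain ⟨L, hL⟩ := hb.exists_forall_lt
  have hr : (0 : ℤ) < r := mod_cast NeZero.pos r
  have hlow : ∀ x < r * (L / r), ¬ b x := fun x hx =>
    hL x (hx.trans_le (Int.mul_ediv_self_le hr.ne'))
  have hZ : ∀ x, x ∈ (hb.finite_zeros (r * (L / r))).toFinset ↔ r * (L / r) ≤ x ∧ ¬ b x := by
    simp
  simp only [esCharge_runner hlow hZ, esCharge_eq_neg_sub_card hlow hZ, Finset.sum_sub_distrib,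
    Finset.sum_const, Finset.card_univ, ZMod.card, nsmul_eq_mul, mul_neg]
  rw [Finset.card_eq_sum_card_fiberwise (f := fun x : ℤ => (x : ZMod r)) (t := Finset.univ)
    (by simp)]
  push_cast
  ring

end Runner

section Partition

variable {f : ℕ → ℕ}

theorem IsPartitionFun.lt_conjCount_succ_iff (hf : IsPartitionFun f) (a k : ℕ) :
    a < conjCount f (k + 1) ↔ k < f a := by
  classical
  obtain ⟨hanti, n, hn⟩ := hf
  have hex : ∃ i, f i ≤ k := ⟨n, by simp [hn n le_rfl]⟩
  have hfind : ∀ i, i ∈ Finset.range (Nat.find hex) ↔ k + 1 ≤ f i := by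
    intro i
    rw [Finset.mem_range, Nat.lt_find_iff, Nat.succ_le_iff]
    exact ⟨fun h => not_le.mp (h i le_rfl),
      fun h i' hi' => not_le.mpr (h.trans_le (hanti _ _ hi'))⟩
  rw [conjCount, Nat.subtype_card _ hfind, Finset.card_range, ← Finset.mem_range, hfind,
    Nat.succ_le_iff]

theorem IsPartitionFun.strictAnti_betaNumber (hf : IsPartitionFun f) :
    StrictAnti (betaNumber f) := by
  refine strictAnti_nat_of_succ_lt fun a => ?_
  have := hf.1 a (a + 1) a.le_succ
  simp only [betaNumber]
  omega

theorem betaNumber_injective : Function.Injective betaNumber := by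
  intro f g h
  funext a
  have := congrFun h a
  simp only [betaNumber] at this
  omega

theorem IsPartitionFun.mem_range_betaNumber_iff (hf : IsPartitionFun f) (x : ℤ) :
    x ∈ Set.range (betaNumber f) ↔ ¬ edgeOf f x := by
  classical
  constructor
  · rintro ⟨a, rfl⟩ ⟨k, hk⟩
    have := hf.lt_conjCount_succ_iff a k
    simp only [betaNumber] at hk
    omega
  · refine fun hx => by_contra fun hne => hx ?_
    obtain ⟨n, hn⟩ := hf.2
    have hex : ∃ a, betaNumber f a < x :=
      ⟨n + (-x).toNat, by rw [betaNumber, hn _ (by omega)]; omega⟩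
    obtain ⟨a, ha, hmin⟩ : ∃ a, betaNumber f a < x ∧ ∀ i < a, x < betaNumber f i :=
      ⟨Nat.find hex, Nat.find_spec hex, fun i hi =>
        (not_lt.mp (Nat.find_min hex hi)).lt_of_ne fun h => hne ⟨i, h.symm⟩⟩
    simp only [betaNumber] at ha hmin
    obtain ⟨k, hk⟩ : ∃ k : ℕ, x + a = k := Int.eq_ofNat_of_zero_le (by omega)
    have hle : conjCount f (k + 1) ≤ a :=
      not_lt.mp fun h => by have := (hf.lt_conjCount_succ_iff a k).mp h; omega
    have hge : a ≤ conjCount f (k + 1) := by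
      rcases a with _ | i
      · exact Nat.zero_le _
      · have := hmin i i.lt_succ_self
        exact (hf.lt_conjCount_succ_iff i k).mpr (by omega)
    exact ⟨k, by omega⟩

theorem edgeOf_injOn : Set.InjOn edgeOf {f | IsPartitionFun f} := by
  intro f hf g hg h
  have hrange : Set.range (betaNumber f) = Set.range (betaNumber g) := by
    ext x
    rw [hf.mem_range_betaNumber_iff, hg.mem_range_betaNumber_iff, h]
  exact betaNumber_injective <| (StrictMono.range_inj (γ := ℤᵒᵈ)
    hf.strictAnti_betaNumber hg.strictAnti_betaNumber).mp hrange

theorem IsPartitionFun.not_edgeOf_of_lt (hf : IsPartitionFun f) {n : ℕ}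
    (hn : ∀ i, n ≤ i → f i = 0) {x : ℤ} (hx : x < -n) : ¬ edgeOf f x := by
  refine (hf.mem_range_betaNumber_iff x).mp ⟨(-1 - x).toNat, ?_⟩
  rw [betaNumber, hn _ (by omega)]
  omega

theorem IsPartitionFun.isEdgeSequence_edgeOf (hf : IsPartitionFun f) :
    IsEdgeSequence (edgeOf f) := by
  obtain ⟨n, hn⟩ := hf.2
  constructor
  · exact (Filter.eventually_lt_atBot _).mono fun x => hf.not_edgeOf_of_lt hn
  · refine Filter.eventually_atTop.mpr ⟨f 0, fun x hx => ?_⟩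
    refine not_not.mp fun h => ?_
    obtain ⟨a, rfl⟩ := (hf.mem_range_betaNumber_iff x).mpr h
    have := hf.1 0 a a.zero_le
    simp only [betaNumber] at hx
    omega

theorem IsPartitionFun.hasHook_iff (hf : IsPartitionFun f) (n : ℕ) :
    HasHook f n ↔ ∃ x, edgeOf f x ∧ ¬ edgeOf f (x + n) := by
  simp only [← hf.mem_range_betaNumber_iff]
  constructor
  · rintro ⟨a, j, hj, hja, hh⟩
    obtain ⟨k, rfl⟩ := Nat.exists_eq_add_of_le' hj
    have := hf.lt_conjCount_succ_iff a k
    exact ⟨_, ⟨k, rfl⟩, a, by rw [betaNumber]; omega⟩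
  · rintro ⟨_, ⟨k, rfl⟩, a, ha⟩
    have := hf.lt_conjCount_succ_iff a k
    rw [betaNumber] at ha
    exact ⟨a, k + 1, by omega, by omega, by omega⟩

theorem IsPartitionFun.esCharge_edgeOf (hf : IsPartitionFun f) : esCharge (edgeOf f) = 0 := by
  obtain ⟨n, hn⟩ := hf.2
  have hlow : ∀ x ≤ betaNumber f n, ¬ edgeOf f x := by
    intro x hx
    rw [betaNumber, hn n le_rfl] at hx
    exact hf.not_edgeOf_of_lt hn (by omega)
  rw [esCharge_eq_of_strictAnti hf.strictAnti_betaNumber hf.mem_range_betaNumber_iff hlow,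
    betaNumber, hn n le_rfl]
  omega

theorem IsEdgeSequence.exists_edgeOf_eq {b : ℤ → Prop} (hb : IsEdgeSequence b)
    (hcharge : esCharge b = 0) : ∃ f, IsPartitionFun f ∧ edgeOf f = b := by
  obtain ⟨z, hz, hzb⟩ := hb.exists_strictAnti_mem_range_iff
  obtain ⟨L, hL⟩ := hb.exists_forall_lt
  -- The zeros `z` must become the beta numbers of `f`, which forces `f a = z a + 1 + a`.
  obtain ⟨n, hn⟩ := (hzb (L - 1)).mpr (hL _ (by omega))
  have hanti : Antitone fun a => z a + 1 + a := antitone_nat_of_succ_le fun a => by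
    have := hz (lt_add_one a)
    push_cast
    omega
  have hzero : ∀ a ≥ n, z a + 1 + a = 0 := by
    intro a ha
    have hlow : ∀ x ≤ z a, ¬ b x := fun x hx => hL x (by have := hz.antitone ha; omega)
    have := esCharge_eq_of_strictAnti hz hzb hlow
    omega
  have hnonneg : ∀ a, 0 ≤ z a + 1 + a := fun a =>
    (hzero (max a n) (le_max_right a n)).ge.trans (hanti (le_max_left a n))
  let f : ℕ → ℕ := fun a => (z a + 1 + a).toNat
  have hf : IsPartitionFun f :=
    ⟨fun _ _ hij => Int.toNat_le_toNat (hanti hij), n,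
      fun a ha => Int.toNat_eq_zero.mpr (hzero a ha).le⟩
  have hbeta : betaNumber f = z := by
    funext a
    rw [betaNumber, Int.toNat_of_nonneg (hnonneg a)]
    ring
  refine ⟨f, hf, funext fun x => propext <| not_iff_not.mp ?_⟩
  rw [← hf.mem_range_betaNumber_iff, hbeta, hzb]

theorem IsPartitionFun.not_hasHook_iff_forall_runner_succ {r : ℕ} [NeZero r]
    (hf : IsPartitionFun f) :
    ¬ HasHook f r ↔ ∀ d j, runner r (edgeOf f) d j → runner r (edgeOf f) d (j + 1) := by
  rw [forall_runner_succ_iff, hf.hasHook_iff]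
  push Not
  rfl

end Partition

section ChargeVector

variable {r : ℕ} [NeZero r] {f : ℕ → ℕ}

theorem chargeVec_apply (r : ℕ) [NeZero r] (f : ℕ → ℕ) (c : ZMod r) :
    chargeVec r f c = esCharge (runner r (edgeOf f) (-1 - c)) :=
  rfl

theorem runner_edgeOf_eq_of_not_hasHook (hf : IsPartitionFun f) (hcore : ¬ HasHook f r)
    (d : ZMod r) : runner r (edgeOf f) d = (-chargeVec r f (-1 - d) ≤ ·) := by
  rw [chargeVec_apply, sub_sub_cancel]
  exact (isEdgeSequence_runner hf.isEdgeSequence_edgeOf d).eq_le_of_forall_succ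
    (hf.not_hasHook_iff_forall_runner_succ.mp hcore d)

theorem sum_chargeVec (hf : IsPartitionFun f) : ∑ c, chargeVec r f c = 0 := by
  rw [← hf.esCharge_edgeOf, ← sum_esCharge_runner (r := r) hf.isEdgeSequence_edgeOf]
  exact (Equiv.subLeft (-1 : ZMod r)).sum_comp fun d => esCharge (runner r (edgeOf f) d)

theorem chargeVec_injOn : Set.InjOn (chargeVec r) {f | IsPartitionFun f ∧ ¬ HasHook f r} := by
  rintro f ⟨hf, hfcore⟩ g ⟨hg, hgcore⟩ h
  apply edgeOf_injOn hf hg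
  rw [eq_interleave_runner (r := r) (edgeOf f), eq_interleave_runner (r := r) (edgeOf g)]
  congr 1
  funext d
  rw [runner_edgeOf_eq_of_not_hasHook hf hfcore, runner_edgeOf_eq_of_not_hasHook hg hgcore, h]

theorem exists_chargeVec_eq {v : ZMod r → ℤ} (hv : ∑ c, v c = 0) :
    ∃ f, (IsPartitionFun f ∧ ¬ HasHook f r) ∧ chargeVec r f = v := by
  let b := interleave r fun d j => -v (-1 - d) ≤ j
  have hrunner (d : ZMod r) : runner r b d = (-v (-1 - d) ≤ ·) := runner_interleave _ d
  have hb : IsEdgeSequence b := isEdgeSequence_interleave fun d => isEdgeSequence_const_le _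
  have hcharge : esCharge b = 0 := by
    rw [← sum_esCharge_runner (r := r) hb, ← hv, ← (Equiv.subLeft (-1 : ZMod r)).sum_comp v]
    simp only [hrunner, esCharge_const_le, neg_neg, Equiv.subLeft_apply]
  obtain ⟨f, hf, hfb⟩ := hb.exists_edgeOf_eq hcharge
  refine ⟨f, ⟨hf, hf.not_hasHook_iff_forall_runner_succ.mpr fun d j => ?_⟩, funext fun c => ?_⟩
  · rw [hfb, hrunner]
    exact fun h => h.trans (by omega)
  · rw [chargeVec_apply, hfb, hrunner, esCharge_const_le, neg_neg, sub_sub_cancel]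

theorem chargeVec_bijOn : Set.BijOn (chargeVec r) {f | IsPartitionFun f ∧ ¬ HasHook f r}
    {v | ∑ i, v i = 0} :=
  ⟨fun _ hf => sum_chargeVec hf.1, chargeVec_injOn, fun _ hv => exists_chargeVec_eq hv⟩

end ChargeVector

section Kappa

theorem residueCount_eq_sum (r : ℕ) {f : ℕ → ℕ} {n : ℕ} (hn : ∀ i, n ≤ i → f i = 0)
    (c : ZMod r) :
    residueCount r f c = ∑ a ∈ Finset.range n,
      ((Finset.range (f a)).filter fun q : ℕ => (a - q : ZMod r) = c).card := by
  let boxes := (Finset.range n).sigma fun a =>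
    (Finset.range (f a)).filter fun q : ℕ => (a - q : ZMod r) = c
  have hboxes (x : ℕ × ℕ) : x ∈ boxes.map (Equiv.sigmaEquivProd ℕ ℕ).toEmbedding ↔
      x.2 < f x.1 ∧ ((x.1 - x.2 : ℤ) : ZMod r) = c := by
    have hrow : x.2 < f x.1 → x.1 < n := fun h =>
      lt_of_not_ge fun hx => by rw [hn _ hx] at h; exact h.not_ge (Nat.zero_le _)
    simp only [boxes, Finset.mem_map_equiv, Finset.mem_sigma, Finset.mem_filter, Finset.mem_range]
    simpa using fun h _ => hrow h
  rw [residueCount, Nat.subtype_card _ hboxes, Finset.card_map, Finset.card_sigma]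

theorem kappa_eq_card_sub_card (r : ℕ) {f : ℕ → ℕ} {n : ℕ} (hn : ∀ i, n ≤ i → f i = 0)
    (c : ZMod r) :
    kappa r f c = ((Finset.range n).filter fun a : ℕ => (a : ZMod r) = c).card -
      ((Finset.range n).filter fun a : ℕ => (a - f a : ZMod r) = c).card := by
  -- Column `q` has residue `c + 1` exactly when column `q + 1` of the same row has residue `c`.
  have htelescope (a : ℕ) := Finset.sum_range_sub' (fun q : ℕ =>
    if (a - q : ZMod r) = c then (1 : ℤ) else 0) (f a)
  simp only [kappa, residueCount_eq_sum r hn, Finset.card_filter, Nat.cast_sum, Nat.cast_ite,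
    Nat.cast_one, Nat.cast_zero, ← Finset.sum_sub_distrib]
  refine Finset.sum_congr rfl fun a _ => ?_
  simpa [← sub_sub, sub_eq_iff_eq_add] using htelescope a

theorem card_filter_range_mul_natCast_eq (r : ℕ) [NeZero r] (M : ℕ) (c : ZMod r) :
    ((Finset.range (r * M)).filter fun a : ℕ => (a : ZMod r) = c).card = M := by
  have hmod (a : ℕ) : (a : ZMod r) = c ↔ a ≡ c.val [MOD r] := by
    rw [← ZMod.natCast_eq_natCast_iff, ZMod.natCast_zmod_val]
  simp only [hmod, ← Nat.count_eq_card_filter_range]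
  simp [Nat.count_modEq_card _ (NeZero.pos r), NeZero.pos r]

theorem kappa_eq_chargeVec (r : ℕ) [NeZero r] {f : ℕ → ℕ} (hf : IsPartitionFun f) :
    kappa r f = chargeVec r f := by
  funext c
  obtain ⟨M, hM⟩ := hf.2
  have hn : ∀ i, r * M ≤ i → f i = 0 := fun i hi =>
    hM i ((Nat.le_mul_of_pos_left M (NeZero.pos r)).trans hi)
  have hlow : ∀ x < (r : ℤ) * -M, ¬ edgeOf f x := fun x hx =>
    hf.not_edgeOf_of_lt hn (by push_cast; linarith)
  have hZ (x : ℤ) : x ∈ (Finset.range (r * M)).image (betaNumber f) ↔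
      (r : ℤ) * -M ≤ x ∧ ¬ edgeOf f x := by
    rw [mem_image_range_iff_of_strictAnti hf.strictAnti_betaNumber, hf.mem_range_betaNumber_iff,
      betaNumber, hn _ le_rfl, ← Int.add_one_le_iff]
    push_cast
    ring_nf
  have hresidue (a : ℕ) : (betaNumber f a : ZMod r) = -1 - c ↔ (a - f a : ZMod r) = c := by
    simp only [betaNumber, Int.cast_sub, Int.cast_natCast, Int.cast_one]
    constructor <;> intro h <;> linear_combination -h
  rw [chargeVec_apply, esCharge_runner hlow hZ, Finset.filter_image,
    Finset.card_image_of_injective _ hf.strictAnti_betaNumber.injective]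
  simp only [hresidue, kappa_eq_card_sub_card r hn, card_filter_range_mul_natCast_eq, neg_neg]

end Kappa

theorem stmt6_general (r : ℕ) [NeZero r] :
    (∀ f : ℕ → ℕ, IsPartitionFun f → kappa r f = chargeVec r f) ∧
    Set.BijOn (fun f : ℕ → ℕ => kappa r f)
      {f : ℕ → ℕ | IsPartitionFun f ∧ ¬ HasHook f r}
      {v : ZMod r → ℤ | ∑ i : ZMod r, v i = 0} :=
  ⟨fun _ hf => kappa_eq_chargeVec r hf,
    chargeVec_bijOn.congr fun _ hf => (kappa_eq_chargeVec r hf.1).symm⟩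

/-- The restriction of `κ` to `r`-cores coincides with the
charge-vector bijection from `r`-cores to the `sl_r` root lattice; in particular `κ`
restricted to `r`-cores is a bijection onto `Q`. -/
theorem stmt6 (r : ℕ) [NeZero r] :
    (∀ f : ℕ → ℕ, IsPartitionFun f → ¬ HasHook f r → kappa r f = chargeVec r f) ∧
    Set.BijOn (fun f : ℕ → ℕ => kappa r f)
      {f : ℕ → ℕ | IsPartitionFun f ∧ ¬ HasHook f r}
      {v : ZMod r → ℤ | ∑ i : ZMod r, v i = 0} :=
  ⟨fun f hf _ => (stmt6_general r).1 f hf, (stmt6_general r).2⟩
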